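/- Let w₁ ∈ F_{d₁} and w₂ ∈ F_{d₂} be words. If the diagonal matrix diag(i, −i) belongs to both w₁(SU(2)) and w₂(SU(2)), then for every integer n ≥ 2, every element of SU(n) is a product g₁g₂ with g₁ ∈ w₁(SU(n)) and g₂ ∈ w₂(SU(n)); that is, SU(n) = w₁(SU(n))·w₂(SU(n)). -/

import Mathlib

/-- The set of `w`-values in the subgroup of `G` given by the set `S`:
elements obtained by evaluating the word `w` at a `d`-tuple of elements of `S`. -/
def wordValuesIn {d : ℕ} {G : Type*} [Group G] (w : FreeGroup (Fin d)) (S : Set G) : Set G :=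
  {x | ∃ g : Fin d → G, (∀ i, g i ∈ S) ∧ FreeGroup.lift g w = x}

/-- `SU(n)`, the special unitary group, as the subset of the unitary group consisting of
matrices of determinant 1. -/
def SU (n : ℕ) : Set (Matrix.unitaryGroup (Fin n) ℂ) :=
  {M | (M : Matrix (Fin n) (Fin n) ℂ).det = 1}

/-!
By the spectral theorem, unitary matrices are conjugate iff their characteristic polynomials agree;
in `SU(2)` the conjugacy class is thus determined by the trace. The set of `w`-values in the
connected group `SU(2)` is connected, closed under conjugation and contains `1`, so with an element
of trace `0` it contains every element of nonnegative trace, in particular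
`d = diag(z⁻¹, z)` and `d⁻¹`, where `z = exp(iπ / n)`.

The representation of `SU(2)` on the symmetric power `Sym^(n-1) ℂ²` sends `d` to a diagonal matrix
with the `n` distinct eigenvalues `z ^ (1 - n) * ζ ^ k`, where `ζ = z ^ 2` is a primitive `n`-th
root of unity. A scalar multiple `N` of the cyclic permutation matrix has the same spectrum. Hence
`N` is a `w₁`-value and `N⁻¹` is a `w₂`-value in `SU(n)`.

Every element of `SU(n)` is conjugate to a commutator `⁅N, y⁆ = N * (y * N⁻¹ * y⁻¹)` with `y`
diagonal, and this is the product of a `w₁`-value and a `w₂`-value.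
-/

open Matrix

theorem exists_comp_perm_eq_of_map_univ_eq {ι α : Type*} [Fintype ι] {a b : ι → α}
    (h : Finset.univ.val.map a = Finset.univ.val.map b) : ∃ σ : Equiv.Perm ι, b ∘ σ = a := by
  classical
  have hcard (c : α) : Fintype.card {i // a i = c} = Fintype.card {i // b i = c} := by
    have := congr_arg (Multiset.count c) h
    simpa [Multiset.count_map, Fintype.card_subtype, Finset.card_def, eq_comm] using this
  let e (c : α) : {i // a i = c} ≃ {i // b i = c} := Fintype.equivOfCardEq (hcard c)
  exact ⟨Equiv.ofFiberEquiv e, funext (Equiv.ofFiberEquiv_map e)⟩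

section Diagonal

variable {n : Type*} [Fintype n] [DecidableEq n]

/-- The diagonal matrices with entries on the unit circle, as a homomorphism into the unitary group.
Its image is a maximal torus, which meets every conjugacy class. -/
noncomputable def diagonalUnitary : (n → Circle) →* unitaryGroup n ℂ where
  toFun t := ⟨diagonal fun i => (t i : ℂ), by
    simp [mem_unitaryGroup_iff, star_eq_conjTranspose, diagonal_conjTranspose,
      ← Circle.coe_inv_eq_conj, Pi.star_def]⟩
  map_one' := Subtype.ext (by simp)
  map_mul' s t := Subtype.ext (by simp)

@[simp]
theorem coe_diagonalUnitary (t : n → Circle) :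
    (diagonalUnitary t : Matrix n n ℂ) = diagonal fun i => (t i : ℂ) :=
  rfl

theorem continuous_diagonalUnitary :
    Continuous (diagonalUnitary : (n → Circle) → unitaryGroup n ℂ) :=
  Continuous.subtype_mk (by fun_prop) _

theorem det_diagonalUnitary (t : n → Circle) :
    (diagonalUnitary t : Matrix n n ℂ).det = (∏ i, t i : Circle) := by
  rw [coe_diagonalUnitary, det_diagonal]
  exact (map_prod Circle.coeHom t Finset.univ).symm

open scoped Matrix.Norms.L2Operator in
theorem exists_isHermitian_exp_eq (x : unitaryGroup n ℂ) :
    ∃ H : Matrix n n ℂ, H.IsHermitian ∧ NormedSpace.exp (Complex.I • H) = (x : Matrix n n ℂ) := by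
  -- The spectrum is finite, so the branch cut of `arg` does no harm.
  have hcont (f : ℂ → ℂ) : ContinuousOn f (spectrum ℂ (x : Matrix n n ℂ)) :=
    (Set.toFinite _).continuousOn f
  have hx : IsStarNormal (x : Matrix n n ℂ) := inferInstance
  refine ⟨cfc (fun z : ℂ => (z.arg : ℂ)) (x : Matrix n n ℂ), IsSelfAdjoint.cfc_arg _, ?_⟩
  rw [← CFC.exp_eq_normedSpace_exp (𝕜 := ℂ), ← cfc_smul _ _ _ (hcont _),
    ← cfc_comp' _ _ _ (by fun_prop) (hcont _) hx]
  conv_rhs => rw [← cfc_id' ℂ (x : Matrix n n ℂ) hx]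
  refine cfc_congr fun z hz => ?_
  have hz1 : ‖z‖ = 1 := spectrum.norm_eq_one_of_unitary x.2 hz
  simpa [hz1, ← Complex.exp_eq_exp_ℂ, mul_comm] using Complex.norm_mul_exp_arg_mul_I z

theorem exists_isConj_diagonalUnitary (x : unitaryGroup n ℂ) :
    ∃ t : n → Circle, IsConj (diagonalUnitary t) x := by
  obtain ⟨H, hH, hx⟩ := exists_isHermitian_exp_eq x
  set v := hH.eigenvectorUnitary with hv
  refine ⟨fun i => Circle.exp (hH.eigenvalues i), isConj_iff.2 ⟨v, Subtype.ext (Eq.symm ?_)⟩⟩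
  have hv_inv : (v : Matrix n n ℂ)⁻¹ = (v⁻¹ : unitaryGroup n ℂ) :=
    inv_eq_right_inv (by simp [← Unitary.star_eq_inv])
  have hIH : Complex.I • H =
      v * diagonal (Complex.I • (Complex.ofReal ∘ hH.eigenvalues)) * (v : Matrix n n ℂ)⁻¹ := by
    conv_lhs => rw [hH.spectral_theorem, ← map_smul, ← diagonal_smul, ← hv]
    rw [hv_inv]
    rfl
  rw [← hx, hIH, exp_conj _ _ Unitary.isUnit_coe, exp_diagonal, hv_inv]
  congr
  ext i
  simp [Pi.coe_exp, ← Complex.exp_eq_exp_ℂ, mul_comm]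

/-- The permutation matrix of `σ` as a unitary matrix, with the convention
`permUnitary σ *ᵥ v = v ∘ σ` of `Equiv.Perm.permMatrix`. Conjugation by it permutes the entries of
diagonal matrices. -/
noncomputable def permUnitary (σ : Equiv.Perm n) : unitaryGroup n ℂ :=
  ⟨σ.permMatrix ℂ, by
    simp [mem_unitaryGroup_iff, star_eq_conjTranspose, ← permMatrix_mul]⟩

theorem permUnitary_mul_diagonalUnitary (σ : Equiv.Perm n) (t : n → Circle) :
    permUnitary σ * diagonalUnitary t = diagonalUnitary (t ∘ σ) * permUnitary σ := by
  ext i j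
  by_cases h : σ i = j <;> simp [permUnitary, PEquiv.toMatrix_apply, h, mul_comm]

theorem isConj_diagonalUnitary_comp (σ : Equiv.Perm n) (t : n → Circle) :
    IsConj (diagonalUnitary t) (diagonalUnitary (t ∘ σ)) :=
  isConj_iff.2 ⟨permUnitary σ, by simp [permUnitary_mul_diagonalUnitary]⟩

theorem charpoly_eq_of_isConj {x y : unitaryGroup n ℂ} (h : IsConj x y) :
    (x : Matrix n n ℂ).charpoly = (y : Matrix n n ℂ).charpoly := by
  obtain ⟨g, rfl⟩ := isConj_iff.1 h
  rw [UnitaryGroup.mul_val, charpoly_mul_comm, ← UnitaryGroup.mul_val]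
  simp

theorem roots_charpoly_diagonal {R : Type*} [CommRing R] [IsDomain R] (d : n → R) :
    (diagonal d).charpoly.roots = Finset.univ.val.map d := by
  rw [charpoly_diagonal]
  have := Polynomial.roots_multiset_prod_X_sub_C (Finset.univ.val.map d)
  rwa [Multiset.map_map] at this

theorem isConj_of_charpoly_eq {x y : unitaryGroup n ℂ}
    (h : (x : Matrix n n ℂ).charpoly = (y : Matrix n n ℂ).charpoly) : IsConj x y := by
  obtain ⟨s, hs⟩ := exists_isConj_diagonalUnitary x
  obtain ⟨t, ht⟩ := exists_isConj_diagonalUnitary y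
  have hroots : Finset.univ.val.map (fun i => (s i : ℂ)) =
      Finset.univ.val.map (fun i => (t i : ℂ)) := by
    rw [← roots_charpoly_diagonal, ← roots_charpoly_diagonal]
    exact congr_arg Polynomial.roots
      ((charpoly_eq_of_isConj hs).trans (h.trans (charpoly_eq_of_isConj ht).symm))
  obtain ⟨σ, hσ⟩ := exists_comp_perm_eq_of_map_univ_eq hroots
  have : s = t ∘ σ := funext fun i => Circle.ext (congr_fun hσ i).symm
  exact hs.symm.trans (this ▸ (isConj_diagonalUnitary_comp σ t).symm.trans ht)

theorem charpoly_eq_charpoly_diagonal_of_mulVec_eq_smul {K : Type*} [Field K] {A : Matrix n n K}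
    {μ : n → K} (hμ : Function.Injective μ) {v : n → n → K} (hv : ∀ i, v i ≠ 0)
    (hAv : ∀ i, A *ᵥ v i = μ i • v i) : A.charpoly = (diagonal μ).charpoly := by
  have hroot (i : n) : A.charpoly.eval (μ i) = 0 := by
    rw [← Polynomial.IsRoot.def, ← mem_spectrum_iff_isRoot_charpoly, ← spectrum_toLin',
      ← Module.End.hasEigenvalue_iff_mem_spectrum]
    exact Module.End.hasEigenvalue_of_hasEigenvector (x := v i)
      ⟨Module.End.mem_eigenspace_iff.2 (by simpa using hAv i), hv i⟩
  refine Polynomial.eq_of_degree_le_of_eval_index_eq Finset.univ hμ.injOn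
    (by simp [charpoly_degree_eq_dim]) (by simp only [charpoly_degree_eq_dim])
    (by simp only [(charpoly_monic _).leadingCoeff]) fun i _ => ?_
  rw [hroot, charpoly_diagonal, Polynomial.eval_prod]
  exact (Finset.prod_eq_zero (Finset.mem_univ i) (by simp)).symm

end Diagonal

theorem exists_comp_finRotate_div_eq {A : Type*} [CommGroup A] {m : ℕ} {t : Fin (m + 1) → A}
    (ht : ∏ i, t i = 1) : ∃ s : Fin (m + 1) → A, (s ∘ finRotate (m + 1)) / s = t := by
  refine ⟨Fin.partialProd (t ∘ Fin.castSucc), funext fun j => ?_⟩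
  cases j using Fin.lastCases with
  | cast i => simp [Fin.partialProd_succ]
  | last =>
    rw [Fin.prod_univ_castSucc, mul_eq_one_iff_inv_eq] at ht
    simp [← ht, Fin.partialProd, List.take_of_length_le, List.prod_ofFn]

open scoped commutatorElement

section SpecialUnitary

variable {n : ℕ}

/-- The determinant on the unitary group. As a homomorphism to the commutative group `ℂˣ` it kills
commutators, and its kernel is `SU n`. -/
noncomputable def unitaryDet (n : ℕ) : unitaryGroup (Fin n) ℂ →* ℂˣ :=
  (detMonoidHom.comp (unitaryGroup (Fin n) ℂ).subtype).toHomUnits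

theorem coe_ker_unitaryDet (n : ℕ) : ((unitaryDet n).ker : Set (unitaryGroup (Fin n) ℂ)) = SU n :=
  Set.ext fun _ => Units.ext_iff

theorem diagonalUnitary_mem_SU_iff {t : Fin n → Circle} :
    diagonalUnitary t ∈ SU n ↔ ∏ i, t i = 1 := by
  rw [SU, Set.mem_ofPred_eq, det_diagonalUnitary, Circle.coe_eq_one]

theorem mem_SU_of_isConj {x y : unitaryGroup (Fin n) ℂ} (h : IsConj x y) (hx : x ∈ SU n) :
    y ∈ SU n := by
  rw [← coe_ker_unitaryDet] at hx ⊢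
  exact (isConj_iff_eq.1 ((unitaryDet n).map_isConj h)).symm.trans hx

theorem exists_isConj_commutatorElement (r : Fin n → Circle) {x : unitaryGroup (Fin n) ℂ}
    (hx : x ∈ SU n) : ∃ y, IsConj ⁅diagonalUnitary r * permUnitary (finRotate n), y⁆ x := by
  obtain ⟨t, htx⟩ := exists_isConj_diagonalUnitary x
  have ht := diagonalUnitary_mem_SU_iff.1 (mem_SU_of_isConj htx.symm hx)
  cases n with
  | zero => exact ⟨1, by rwa [Subsingleton.elim ⁅_, _⁆ (diagonalUnitary t)]⟩
  | succ m =>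
    obtain ⟨s, rfl⟩ := exists_comp_finRotate_div_eq ht
    -- Conjugation by the cycle shifts the entries of `diagonalUnitary s`, so the commutator is
    -- diagonal with the successive quotients of these entries.
    refine ⟨diagonalUnitary s, ?_⟩
    rwa [commutatorElement_def, mul_assoc (diagonalUnitary r), permUnitary_mul_diagonalUnitary,
      ← mul_assoc, ← map_mul, mul_comm r, map_mul, mul_assoc (diagonalUnitary _),
      mul_inv_cancel_right, ← map_inv, ← map_mul, ← div_eq_mul_inv]

theorem map_mem_SU {k : ℕ} (f : unitaryGroup (Fin n) ℂ →* unitaryGroup (Fin k) ℂ) :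
    Set.MapsTo f (SU n) (SU k) := by
  intro x hx
  obtain ⟨y, hy⟩ := exists_isConj_commutatorElement 1 hx
  let φ := (unitaryDet k).comp f
  have hφ : φ ⁅_, y⁆ = φ x := isConj_iff_eq.1 (φ.map_isConj hy)
  rw [← coe_ker_unitaryDet]
  change φ x = 1
  rw [← hφ, map_commutatorElement, commutatorElement_eq_one_iff_mul_comm, mul_comm]

end SpecialUnitary

section WordValues

variable {d : ℕ} {G : Type*} [Group G] (w : FreeGroup (Fin d))

theorem wordValuesIn_subset (H : Subgroup G) : wordValuesIn w (H : Set G) ⊆ H := by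
  rintro _ ⟨g, hg, rfl⟩
  exact FreeGroup.range_lift_le (Set.range_subset_iff.2 hg) ⟨w, rfl⟩

theorem one_mem_wordValuesIn {S : Set G} (h : 1 ∈ S) : 1 ∈ wordValuesIn w S :=
  ⟨1, fun _ => h, Subgroup.mem_bot.1 (wordValuesIn_subset w ⊥ ⟨1, fun _ => rfl, rfl⟩)⟩

variable {w}

theorem map_mem_wordValuesIn {H : Type*} [Group H] {f : G →* H} {S : Set G} {T : Set H}
    (hf : Set.MapsTo f S T) {x : G} (hx : x ∈ wordValuesIn w S) : f x ∈ wordValuesIn w T := by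
  obtain ⟨g, hg, rfl⟩ := hx
  exact ⟨f ∘ g, fun i => hf (hg i),
    (FreeGroup.lift_unique (f.comp (FreeGroup.lift g)) (by simp)).symm⟩

theorem mem_wordValuesIn_of_isConj {S : Set G} (hS : ∀ ⦃x y⦄, IsConj x y → x ∈ S → y ∈ S)
    {x y : G} (h : IsConj x y) (hx : x ∈ wordValuesIn w S) : y ∈ wordValuesIn w S := by
  obtain ⟨c, rfl⟩ := isConj_iff.1 h
  exact map_mem_wordValuesIn (f := (MulAut.conj c).toMonoidHom)
    (fun z => hS (isConj_iff.2 ⟨c, rfl⟩)) hx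

variable (w) in
theorem continuous_freeGroupLift [TopologicalSpace G] [IsTopologicalGroup G] :
    Continuous fun g : Fin d → G => FreeGroup.lift g w := by
  induction w using FreeGroup.induction_on with
  | C1 => simpa using continuous_const
  | of i => simpa using continuous_apply i
  | inv_of i _ => exact (continuous_apply i).inv.congr fun g => by simp
  | mul x y hx hy => exact (hx.mul hy).congr fun g => (map_mul (FreeGroup.lift g) x y).symm

theorem isPreconnected_wordValuesIn [TopologicalSpace G] [IsTopologicalGroup G] {S : Set G}
    (hS : IsPreconnected S) : IsPreconnected (wordValuesIn w S) := by
  have : wordValuesIn w S = (fun g => FreeGroup.lift g w) '' Set.univ.pi fun _ : Fin d => S := by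
    ext; simp [wordValuesIn]
  exact this ▸
    (isPreconnected_univ_pi fun _ => hS).image _ (continuous_freeGroupLift w).continuousOn

end WordValues

section SpecialUnitaryWordValues

theorem isPreconnected_setOf_prod_eq_one {ι A : Type*} [Fintype ι] [CommGroup A]
    [TopologicalSpace A] [IsTopologicalGroup A] [PreconnectedSpace A] :
    IsPreconnected {t : ι → A | ∏ i, t i = 1} := by
  classical
  rcases isEmpty_or_nonempty ι with hι | ⟨⟨i₀⟩⟩
  · exact Set.subsingleton_of_subsingleton.isPreconnected
  let f (t : ι → A) : ι → A := t * Pi.mulSingle i₀ (∏ i, t i)⁻¹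
  have hf : Continuous f := by
    have := continuous_mulSingle (A := fun _ : ι => A) i₀
    fun_prop
  suffices {t : ι → A | ∏ i, t i = 1} = Set.range f from this ▸ isPreconnected_range hf
  ext t
  refine ⟨fun ht => ⟨t, ?_⟩, ?_⟩
  · simp [f, Set.mem_ofPred_eq ▸ ht]
  · rintro ⟨s, rfl⟩
    simp [f, Finset.prod_mul_distrib]

theorem isPreconnected_SU (n : ℕ) : IsPreconnected (SU n) := by
  let T : Set (unitaryGroup (Fin n) ℂ) := diagonalUnitary '' {t | ∏ i, t i = 1}
  have hT : IsPreconnected T :=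
    isPreconnected_setOf_prod_eq_one.image _ continuous_diagonalUnitary.continuousOn
  have hSU : SU n = ⋃ v : unitaryGroup (Fin n) ℂ, (fun x => v * x * v⁻¹) '' T := by
    ext x
    simp only [Set.mem_iUnion, T, Set.image_image]
    constructor
    · intro hx
      obtain ⟨t, ht⟩ := exists_isConj_diagonalUnitary x
      obtain ⟨v, hv⟩ := isConj_iff.1 ht
      exact ⟨v, t, diagonalUnitary_mem_SU_iff.1 (mem_SU_of_isConj ht.symm hx), hv⟩
    · rintro ⟨v, t, ht, hv⟩
      exact mem_SU_of_isConj (isConj_iff.2 ⟨v, hv⟩) (diagonalUnitary_mem_SU_iff.2 ht)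
  rw [hSU]
  refine isPreconnected_iUnion ⟨1, Set.mem_iInter.2 fun v => ?_⟩ fun v => ?_
  · exact ⟨1, ⟨1, by simp, map_one _⟩, by simp⟩
  · exact hT.image _ (by fun_prop)

theorem exists_trace_eq_two_mul_re {x : unitaryGroup (Fin 2) ℂ} (hx : x ∈ SU 2) :
    ∃ z : Circle, (x : Matrix (Fin 2) (Fin 2) ℂ).trace = (2 * (z : ℂ).re : ℝ) := by
  obtain ⟨t, ht⟩ := exists_isConj_diagonalUnitary x
  have ht_prod : t 0 * t 1 = 1 := by
    simpa using diagonalUnitary_mem_SU_iff.1 (mem_SU_of_isConj ht.symm hx)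
  refine ⟨t 0, ?_⟩
  rw [trace_eq_neg_charpoly_coeff, ← charpoly_eq_of_isConj ht, ← trace_eq_neg_charpoly_coeff,
    coe_diagonalUnitary, trace_diagonal, Fin.sum_univ_two, eq_inv_of_mul_eq_one_right ht_prod,
    Circle.coe_inv_eq_conj, Complex.add_conj]

theorem isConj_of_re_trace_eq {x y : unitaryGroup (Fin 2) ℂ} (hx : x ∈ SU 2) (hy : y ∈ SU 2)
    (h : (x : Matrix (Fin 2) (Fin 2) ℂ).trace.re = (y : Matrix (Fin 2) (Fin 2) ℂ).trace.re) :
    IsConj x y := by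
  obtain ⟨z, hz⟩ := exists_trace_eq_two_mul_re hx
  obtain ⟨z', hz'⟩ := exists_trace_eq_two_mul_re hy
  have htrace : (x : Matrix (Fin 2) (Fin 2) ℂ).trace = (y : Matrix (Fin 2) (Fin 2) ℂ).trace := by
    rw [hz, hz', Complex.ofReal_re, Complex.ofReal_re] at h
    rw [hz, hz', h]
  have hdet : (x : Matrix (Fin 2) (Fin 2) ℂ).det = (y : Matrix (Fin 2) (Fin 2) ℂ).det :=
    Eq.trans hx (Eq.symm hy)
  exact isConj_of_charpoly_eq (by rw [charpoly_fin_two, charpoly_fin_two, htrace, hdet])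

theorem re_trace_le_card {n : Type*} [Fintype n] [DecidableEq n] (x : unitaryGroup n ℂ) :
    (x : Matrix n n ℂ).trace.re ≤ Fintype.card n := by
  rw [trace, Complex.re_sum, Fintype.card_eq_sum_ones, Nat.cast_sum]
  refine Finset.sum_le_sum fun i _ => (Complex.re_le_norm _).trans ?_
  simpa using entry_norm_bound_of_unitary x.2 i i

theorem mem_wordValuesIn_SU_two_of_re_trace_le {d : ℕ} {w : FreeGroup (Fin d)}
    {x y : unitaryGroup (Fin 2) ℂ} (hx : x ∈ wordValuesIn w (SU 2)) (hy : y ∈ SU 2)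
    (h : (x : Matrix (Fin 2) (Fin 2) ℂ).trace.re ≤ (y : Matrix (Fin 2) (Fin 2) ℂ).trace.re) :
    y ∈ wordValuesIn w (SU 2) := by
  let τ (u : unitaryGroup (Fin 2) ℂ) : ℝ := (u : Matrix (Fin 2) (Fin 2) ℂ).trace.re
  have hτ : Continuous τ :=
    Complex.continuous_re.comp (Continuous.matrix_trace continuous_subtype_val)
  have hy_le : τ y ≤ τ 1 := by simpa [τ] using re_trace_le_card y
  obtain ⟨u, hu, huy⟩ := (isPreconnected_wordValuesIn (isPreconnected_SU 2)).intermediate_value hx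
    (one_mem_wordValuesIn w (by simp [SU])) hτ.continuousOn ⟨h, hy_le⟩
  have hu_mem : u ∈ SU 2 := by
    rw [← coe_ker_unitaryDet] at hu ⊢
    exact wordValuesIn_subset w _ hu
  exact mem_wordValuesIn_of_isConj (fun _ _ => mem_SU_of_isConj)
    (isConj_of_re_trace_eq hu_mem hy huy) hu

end SpecialUnitaryWordValues

section FiberIsometry

variable {A K : Type*} [Fintype A] [DecidableEq K] {q : A → K}

/-- The matrix whose column `k` is the normalised indicator vector of the fibre `q ⁻¹' {k}`. For
surjective `q` it is an isometry onto the functions which are constant on the fibres of `q`. -/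
noncomputable def fiberIsometry (q : A → K) : Matrix A K ℂ :=
  of fun a k => if q a = k then ((√(Fintype.card {b // q b = k}) : ℝ) : ℂ)⁻¹ else 0

theorem sqrt_card_fiber_ne_zero (q : A → K) (a : A) :
    ((√(Fintype.card {b // q b = q a}) : ℝ) : ℂ) ≠ 0 :=
  have : Nonempty {b // q b = q a} := ⟨⟨a, rfl⟩⟩
  Complex.ofReal_ne_zero.2 (Real.sqrt_ne_zero'.2 (Nat.cast_pos.2 Fintype.card_pos))

theorem sum_star_fiberIsometry_mul {a : A} {f : A → ℂ} (hf : ∀ b, q b = q a → f b = f a) :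
    ∑ b, star (fiberIsometry q b (q a)) * f b =
      (√(Fintype.card {b // q b = q a}) : ℝ) * f a := by
  set c := ((√(Fintype.card {b // q b = q a}) : ℝ) : ℂ) with hc
  have hc_sq : (Fintype.card {b // q b = q a} : ℂ) = c * c := by
    rw [hc, ← Complex.ofReal_mul, Real.mul_self_sqrt (Nat.cast_nonneg _), Complex.ofReal_natCast]
  calc ∑ b, star (fiberIsometry q b (q a)) * f b
      = ∑ b, if q b = q a then c⁻¹ * f a else 0 := by
        refine Finset.sum_congr rfl fun b _ => ?_
        by_cases h : q b = q a <;> simp [fiberIsometry, h, hf, hc]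
    _ = c * c * (c⁻¹ * f a) := by
        rw [← Finset.sum_filter, Finset.sum_const, nsmul_eq_mul, ← Fintype.card_subtype, hc_sq]
    _ = c * f a := by
        have := sqrt_card_fiber_ne_zero q a
        field_simp

theorem conjTranspose_fiberIsometry_mul_self (hq : Function.Surjective q) :
    (fiberIsometry q)ᴴ * fiberIsometry q = 1 := by
  ext k l
  obtain ⟨a, rfl⟩ := hq k
  simp only [mul_apply, conjTranspose_apply]
  rw [sum_star_fiberIsometry_mul fun b hb => by simp [fiberIsometry, hb]]
  by_cases h : q a = l
  · subst h
    rw [one_apply_eq, fiberIsometry, of_apply, if_pos rfl,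
      mul_inv_cancel₀ (sqrt_card_fiber_ne_zero q a)]
  · simp [fiberIsometry, h]

variable [Fintype K]

theorem fiberIsometry_mul_conjTranspose_mul {B : Type*} {M : Matrix A B ℂ}
    (hM : ∀ a b, q a = q b → M a = M b) :
    fiberIsometry q * ((fiberIsometry q)ᴴ * M) = M := by
  ext a j
  rw [mul_apply, Finset.sum_eq_single (q a) (fun k _ hk => by simp [fiberIsometry, hk.symm])
    (by simp), mul_apply]
  simp only [conjTranspose_apply]
  rw [sum_star_fiberIsometry_mul fun b hb => by rw [hM b a hb]]
  rw [fiberIsometry, of_apply, if_pos rfl, inv_mul_cancel_left₀ (sqrt_card_fiber_ne_zero q a)]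

theorem diagonal_comp_mul_fiberIsometry [DecidableEq A] (f : K → ℂ) :
    diagonal (f ∘ q) * fiberIsometry q = fiberIsometry q * diagonal f := by
  ext a k
  by_cases h : q a = k <;> simp [fiberIsometry, h, mul_comm]

end FiberIsometry

section SymPow

variable {ι : Type*}

variable (ι) in
/-- The multiset of values of a function on `Fin m`. Its fibres are the orbits of the permutations
of the tensor factors on the basis of the tensor power. -/
def symOfFn (m : ℕ) (a : Fin m → ι) : Sym ι m :=
  ⟨Finset.univ.val.map a, by simp⟩

theorem symOfFn_surjective (m : ℕ) : Function.Surjective (symOfFn ι m) := by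
  rintro ⟨⟨l⟩, rfl⟩
  refine ⟨l.get, Subtype.ext ?_⟩
  change Multiset.map l.get (Finset.univ : Finset (Fin l.length)).val = l
  rw [Fin.univ_val_map, List.ofFn_get]

theorem exists_comp_perm_eq_of_symOfFn_eq {m : ℕ} {a b : Fin m → ι}
    (h : symOfFn ι m a = symOfFn ι m b) : ∃ σ : Equiv.Perm (Fin m), b ∘ σ = a :=
  exists_comp_perm_eq_of_map_univ_eq (Subtype.ext_iff.1 h)

theorem symOfFn_comp_perm {m : ℕ} (a : Fin m → ι) (σ : Equiv.Perm (Fin m)) :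
    symOfFn ι m (a ∘ σ) = symOfFn ι m a :=
  Subtype.ext ((Multiset.map_map a σ _).symm.trans
    (congr_arg (Multiset.map a) (Multiset.map_univ_val_equiv σ)))

variable [Fintype ι] [DecidableEq ι]

/-- The tensor power of a square matrix, one factor for each element of `κ`. Its rows and columns
are indexed by the functions `κ → ι`, which label the pure tensors of basis vectors. -/
def tensorPow (κ : Type*) [Fintype κ] [DecidableEq κ] {R : Type*} [CommSemiring R] :
    Matrix ι ι R →* Matrix (κ → ι) (κ → ι) R where
  toFun g := of fun a b => ∏ k, g (a k) (b k)
  map_one' := by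
    ext a b
    simp [one_apply, Finset.prod_ite_zero, funext_iff]
  map_mul' g h := by
    ext a b
    simp [mul_apply, Finset.prod_univ_sum, Fintype.piFinset_univ, Finset.prod_mul_distrib]

section TensorPow

variable {κ : Type*} [Fintype κ] [DecidableEq κ] {R : Type*} [CommSemiring R]

theorem tensorPow_apply (g : Matrix ι ι R) (a b : κ → ι) :
    tensorPow κ g a b = ∏ k, g (a k) (b k) :=
  rfl

theorem tensorPow_conjTranspose [StarRing R] (g : Matrix ι ι R) :
    tensorPow κ gᴴ = (tensorPow κ g)ᴴ := by
  ext a b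
  simp [tensorPow_apply]

theorem tensorPow_comp_perm (g : Matrix ι ι R) (σ : Equiv.Perm κ) (a b : κ → ι) :
    tensorPow κ g (a ∘ σ) (b ∘ σ) = tensorPow κ g a b :=
  Equiv.prod_comp σ fun k => g (a k) (b k)

theorem tensorPow_diagonal (t : ι → R) :
    tensorPow κ (diagonal t) = diagonal fun a => ∏ k, t (a k) := by
  ext a b
  by_cases h : a = b
  · simp [tensorPow_apply, h]
  · obtain ⟨k, hk⟩ := Function.ne_iff.1 h
    rw [diagonal_apply_ne _ h]
    exact Finset.prod_eq_zero (Finset.mem_univ k) (diagonal_apply_ne _ hk)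

end TensorPow

theorem fiberIsometry_symOfFn_comp_perm {m : ℕ} (a : Fin m → ι) (σ : Equiv.Perm (Fin m)) :
    fiberIsometry (symOfFn ι m) (a ∘ σ) = fiberIsometry (symOfFn ι m) a := by
  ext s
  simp [fiberIsometry, symOfFn_comp_perm]

theorem tensorPow_mul_fiberIsometry_eq_of_symOfFn_eq {m : ℕ} (g : Matrix ι ι ℂ) {a b : Fin m → ι}
    (h : symOfFn ι m a = symOfFn ι m b) :
    (tensorPow (Fin m) g * fiberIsometry (symOfFn ι m)) a =
      (tensorPow (Fin m) g * fiberIsometry (symOfFn ι m)) b := by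
  obtain ⟨σ, rfl⟩ := exists_comp_perm_eq_of_symOfFn_eq h
  ext s
  simp only [mul_apply]
  refine (Fintype.sum_equiv (σ.symm.arrowCongr (Equiv.refl ι)) _ _ fun c => ?_).symm
  exact (congr_arg₂ (· * ·) (tensorPow_comp_perm g σ b c)
    (congr_fun (fiberIsometry_symOfFn_comp_perm c σ) s)).symm

/-- The symmetric power of a square matrix: the compression of its tensor power to the symmetric
tensors, in the orthonormal basis obtained by symmetrising the standard basis. -/
noncomputable def symPow (m : ℕ) : Matrix ι ι ℂ →⋆* Matrix (Sym ι m) (Sym ι m) ℂ where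
  toFun g := (fiberIsometry (symOfFn ι m))ᴴ * (tensorPow (Fin m) g * fiberIsometry (symOfFn ι m))
  map_one' := by
    simp [conjTranspose_fiberIsometry_mul_self (symOfFn_surjective m)]
  map_mul' g h := by
    simp only [map_mul, Matrix.mul_assoc]
    rw [fiberIsometry_mul_conjTranspose_mul fun a b =>
        tensorPow_mul_fiberIsometry_eq_of_symOfFn_eq h]
  map_star' g := by
    simp only [star_eq_conjTranspose, tensorPow_conjTranspose, conjTranspose_mul,
      conjTranspose_conjTranspose, Matrix.mul_assoc]

theorem symPow_apply (m : ℕ) (g : Matrix ι ι ℂ) :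
    symPow m g =
      (fiberIsometry (symOfFn ι m))ᴴ * (tensorPow (Fin m) g * fiberIsometry (symOfFn ι m)) :=
  rfl

theorem symPow_diagonal (m : ℕ) (t : ι → ℂ) :
    symPow m (diagonal t) = diagonal fun s : Sym ι m => ((s : Multiset ι).map t).prod := by
  have : (fun a : Fin m → ι => ∏ k, t (a k)) =
      (fun s : Sym ι m => ((s : Multiset ι).map t).prod) ∘ symOfFn ι m := by
    ext a
    exact congr_arg Multiset.prod (Multiset.map_map t a _).symm
  rw [symPow_apply, tensorPow_diagonal, this, diagonal_comp_mul_fiberIsometry, ← Matrix.mul_assoc,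
    conjTranspose_fiberIsometry_mul_self (symOfFn_surjective m), Matrix.one_mul]

end SymPow

section SymPowFinTwo

theorem multiset_prod_map_fin_two {M : Type*} [CommMonoid M] (s : Multiset (Fin 2))
    (t : Fin 2 → M) :
    (s.map t).prod = t 0 ^ s.count 0 * t 1 ^ s.count 1 := by
  rw [Finset.prod_multiset_map_count, Finset.prod_subset (Finset.subset_univ _), Fin.prod_univ_two]
  intro i _ hi
  rw [Multiset.count_eq_zero_of_notMem (by simpa using hi), pow_zero]

theorem count_zero_add_count_one_eq_card (s : Multiset (Fin 2)) :
    s.count 0 + s.count 1 = s.card := by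
  rw [← Multiset.sum_count_eq_card (s := Finset.univ) (by simp), Fin.sum_univ_two]

/-- The basis of the symmetric power of a two-dimensional space, numbered by the multiplicity of
the second basis vector. -/
def symFinTwoEquiv (m : ℕ) : Sym (Fin 2) m ≃ Fin (m + 1) where
  toFun s := ⟨(s : Multiset (Fin 2)).count 1,
    Nat.lt_succ_of_le ((Multiset.count_le_card _ _).trans_eq s.2)⟩
  invFun k := ⟨Multiset.replicate (m - k) 0 + Multiset.replicate k 1, by
    simpa using Nat.sub_add_cancel (Nat.le_of_lt_succ k.2)⟩
  left_inv s := by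
    have := (count_zero_add_count_one_eq_card (s : Multiset (Fin 2))).trans s.2
    ext i
    fin_cases i <;> simp [Multiset.count_replicate, ← this]
  right_inv k := by simp [Multiset.count_replicate]

theorem coe_symFinTwoEquiv {m : ℕ} (s : Sym (Fin 2) m) :
    (symFinTwoEquiv m s : ℕ) = (s : Multiset (Fin 2)).count 1 :=
  rfl

theorem symPow_diagonal_fin_two (m : ℕ) (a b : ℂ) :
    symPow m (diagonal ![a, b]) = diagonal fun s =>
      a ^ (m - symFinTwoEquiv m s : ℕ) * b ^ (symFinTwoEquiv m s : ℕ) := by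
  rw [symPow_diagonal]
  congr
  ext s
  rw [multiset_prod_map_fin_two, coe_symFinTwoEquiv,
    Nat.sub_eq_of_eq_add ((count_zero_add_count_one_eq_card (s : Multiset (Fin 2))).trans s.2).symm]
  rfl

/-- Reindexing of square matrices, as a star homomorphism so that it restricts to the unitary
groups. -/
def reindexStarHom {K L : Type*} [Fintype K] [DecidableEq K] [Fintype L] [DecidableEq L]
    {R : Type*} [CommSemiring R] [StarRing R] (e : K ≃ L) : Matrix K K R →⋆* Matrix L L R where
  __ := (reindexAlgEquiv R R e : Matrix K K R →* Matrix L L R)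
  map_star' g := conjTranspose_reindex e e g

/-- The irreducible representation of `U(2)` on the `m`-th symmetric power of `ℂ²`, in the
orthonormal basis numbered by `symFinTwoEquiv`. -/
noncomputable def symPowUnitary (m : ℕ) :
    unitaryGroup (Fin 2) ℂ →* unitaryGroup (Fin (m + 1)) ℂ :=
  (Unitary.map ((reindexStarHom (symFinTwoEquiv m)).comp (symPow m))).toMonoidHom

theorem coe_symPowUnitary (m : ℕ) (u : unitaryGroup (Fin 2) ℂ) :
    (symPowUnitary m u : Matrix _ _ ℂ) =
      reindex (symFinTwoEquiv m) (symFinTwoEquiv m) (symPow m (u : Matrix _ _ ℂ)) :=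
  rfl

end SymPowFinTwo

theorem charpoly_smul_permMatrix_finRotate {K : Type*} [Field K] {n : ℕ} {c ζ : K} (hc : c ≠ 0)
    (hζ : IsPrimitiveRoot ζ n) :
    (c • (finRotate n).permMatrix K).charpoly =
      (diagonal fun k : Fin n => c * ζ ^ (k : ℕ)).charpoly := by
  cases n with
  | zero => simp [charpoly, det_isEmpty]
  | succ m =>
    refine charpoly_eq_charpoly_diagonal_of_mulVec_eq_smul
      (v := fun k j => (ζ ^ (k : ℕ)) ^ (j : ℕ)) ?_ ?_ fun k => ?_
    · exact fun k l h => Fin.ext (hζ.pow_inj k.2 l.2 (mul_left_cancel₀ hc h))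
    · exact fun k h => by simpa using congr_fun h 0
    · have hk : (ζ ^ (k : ℕ)) ^ (m + 1) = 1 := by rw [pow_right_comm, hζ.pow_eq_one, one_pow]
      rw [smul_mulVec, permMatrix_mulVec, mul_smul]
      congr 1
      ext j
      cases j using Fin.lastCases with
      | cast j => simp [pow_succ']
      | last => simpa [pow_succ'] using hk.symm

section Waring

variable {m n d d₁ d₂ : ℕ} {w : FreeGroup (Fin d)} {w₁ : FreeGroup (Fin d₁)}
  {w₂ : FreeGroup (Fin d₂)}

theorem isConj_symPowUnitary_diagonalUnitary {z : Circle}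
    (hz : IsPrimitiveRoot ((z : ℂ) ^ 2) (m + 1)) :
    IsConj (symPowUnitary m (diagonalUnitary ![z⁻¹, z]))
      (diagonalUnitary (fun _ => z⁻¹ ^ m) * permUnitary (finRotate (m + 1))) := by
  have hdiag : diagonal (fun i => ((![z⁻¹, z] i : Circle) : ℂ)) =
      diagonal ![(z : ℂ)⁻¹, (z : ℂ)] := by
    congr
    ext i
    fin_cases i <;> simp
  have hentry (k : Fin (m + 1)) :
      (z : ℂ)⁻¹ ^ (m - k : ℕ) * (z : ℂ) ^ (k : ℕ) = (z : ℂ)⁻¹ ^ m * ((z : ℂ) ^ 2) ^ (k : ℕ) := by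
    rw [pow_sub₀ _ (inv_ne_zero z.coe_ne_zero) (Nat.le_of_lt_succ k.2), inv_pow _ (k : ℕ), inv_inv,
      mul_assoc, ← mul_pow, ← sq]
  have hcycle : (diagonalUnitary (fun _ => z⁻¹ ^ m) * permUnitary (finRotate (m + 1)) :
      unitaryGroup (Fin (m + 1)) ℂ).val = (z : ℂ)⁻¹ ^ m • (finRotate (m + 1)).permMatrix ℂ := by
    ext i j
    simp [permUnitary]
  apply isConj_of_charpoly_eq
  rw [coe_symPowUnitary, charpoly_reindex, coe_diagonalUnitary, hdiag, symPow_diagonal_fin_two,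
    hcycle, charpoly_smul_permMatrix_finRotate (pow_ne_zero _ (inv_ne_zero z.coe_ne_zero)) hz,
    ← charpoly_reindex (symFinTwoEquiv m).symm, reindex_apply, submatrix_diagonal_equiv]
  simp only [Function.comp_def, hentry, Equiv.symm_symm]

theorem diagonalUnitary_circleExp_mem_wordValuesIn {u : unitaryGroup (Fin 2) ℂ} {θ : ℝ}
    (hu : u ∈ wordValuesIn w (SU 2))
    (hθ : (u : Matrix (Fin 2) (Fin 2) ℂ).trace.re ≤ 2 * Real.cos θ) :
    diagonalUnitary ![(Circle.exp θ)⁻¹, Circle.exp θ] ∈ wordValuesIn w (SU 2) := by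
  refine mem_wordValuesIn_SU_two_of_re_trace_le hu (diagonalUnitary_mem_SU_iff.2 (by simp)) ?_
  refine hθ.trans_eq ?_
  simp [Fin.sum_univ_two, Circle.coe_inv_eq_conj, -Circle.coe_inv, Complex.exp_ofReal_mul_I_re,
    two_mul]

theorem exists_mul_eq_of_cycle_mem {r : Fin n → Circle}
    (h₁ : diagonalUnitary r * permUnitary (finRotate n) ∈ wordValuesIn w₁ (SU n))
    (h₂ : (diagonalUnitary r * permUnitary (finRotate n))⁻¹ ∈ wordValuesIn w₂ (SU n))
    {x : unitaryGroup (Fin n) ℂ} (hx : x ∈ SU n) :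
    ∃ g₁ ∈ wordValuesIn w₁ (SU n), ∃ g₂ ∈ wordValuesIn w₂ (SU n), x = g₁ * g₂ := by
  obtain ⟨y, hy⟩ := exists_isConj_commutatorElement r hx
  obtain ⟨g, rfl⟩ := isConj_iff.1 hy
  set N := diagonalUnitary r * permUnitary (finRotate n)
  refine ⟨g * N * g⁻¹, mem_wordValuesIn_of_isConj (fun _ _ => mem_SU_of_isConj)
      (isConj_iff.2 ⟨g, rfl⟩) h₁,
    (g * y) * N⁻¹ * (g * y)⁻¹, mem_wordValuesIn_of_isConj (fun _ _ => mem_SU_of_isConj)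
      (isConj_iff.2 ⟨g * y, rfl⟩) h₂, ?_⟩
  rw [commutatorElement_def]
  group

theorem su_waring_two_of_diag_i_general (hn : n ≠ 0) {u₁ u₂ : unitaryGroup (Fin 2) ℂ}
    (hu₁ : u₁ ∈ wordValuesIn w₁ (SU 2)) (hu₂ : u₂ ∈ wordValuesIn w₂ (SU 2))
    (h₁ : (u₁ : Matrix (Fin 2) (Fin 2) ℂ).trace.re ≤ 2 * Real.cos (Real.pi / n))
    (h₂ : (u₂ : Matrix (Fin 2) (Fin 2) ℂ).trace.re ≤ 2 * Real.cos (Real.pi / n))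
    {x : unitaryGroup (Fin n) ℂ} (hx : x ∈ SU n) :
    ∃ g₁ ∈ wordValuesIn w₁ (SU n), ∃ g₂ ∈ wordValuesIn w₂ (SU n), x = g₁ * g₂ := by
  obtain ⟨m, rfl⟩ := Nat.exists_eq_succ_of_ne_zero hn
  set z := Circle.exp (Real.pi / (m + 1 : ℕ)) with hz
  have hz_root : IsPrimitiveRoot ((z : ℂ) ^ 2) (m + 1) := by
    convert Complex.isPrimitiveRoot_exp (m + 1) hn using 1
    rw [hz, Circle.coe_exp, ← Complex.exp_nat_mul]
    push_cast
    ring_nf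
  have hd₁ : diagonalUnitary ![z⁻¹, z] ∈ wordValuesIn w₁ (SU 2) :=
    diagonalUnitary_circleExp_mem_wordValuesIn hu₁ h₁
  have hd₂ : (diagonalUnitary ![z⁻¹, z])⁻¹ ∈ wordValuesIn w₂ (SU 2) := by
    have hinv : (![z⁻¹, z])⁻¹ = ![(z⁻¹)⁻¹, z⁻¹] := by
      ext i
      fin_cases i <;> rfl
    rw [← map_inv, hinv, hz, ← Circle.exp_neg]
    exact diagonalUnitary_circleExp_mem_wordValuesIn hu₂ (by rwa [Real.cos_neg])
  have hN := isConj_symPowUnitary_diagonalUnitary hz_root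
  have hρ := map_mem_SU (symPowUnitary m)
  refine exists_mul_eq_of_cycle_mem
    (mem_wordValuesIn_of_isConj (fun _ _ => mem_SU_of_isConj) hN (map_mem_wordValuesIn hρ hd₁))
    (mem_wordValuesIn_of_isConj (fun _ _ => mem_SU_of_isConj) ?_ (map_mem_wordValuesIn hρ hd₂)) hx
  rw [map_inv]
  exact hN.imp fun _ h => h.inv_right

end Waring

/-- If `diag(i, -i)` is both a `w₁`-value and a `w₂`-value in `SU(2)`,
then `SU(n) = w₁(SU(n)) · w₂(SU(n))` for all `n ≥ 2`. -/
theorem su_waring_two_of_diag_i {d₁ d₂ : ℕ} (w₁ : FreeGroup (Fin d₁)) (w₂ : FreeGroup (Fin d₂))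
    (h : ∃ u : Matrix.unitaryGroup (Fin 2) ℂ,
      u ∈ wordValuesIn w₁ (SU 2) ∧ u ∈ wordValuesIn w₂ (SU 2) ∧
      (u : Matrix (Fin 2) (Fin 2) ℂ) = Matrix.diagonal ![Complex.I, -Complex.I]) :
    ∀ n : ℕ, 2 ≤ n → ∀ x ∈ SU n,
      ∃ g₁ ∈ wordValuesIn w₁ (SU n), ∃ g₂ ∈ wordValuesIn w₂ (SU n), x = g₁ * g₂ := by
  obtain ⟨u, hu₁, hu₂, hu⟩ := h
  intro n hn x hx
  have htr : (u : Matrix (Fin 2) (Fin 2) ℂ).trace.re ≤ 2 * Real.cos (Real.pi / n) := by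
    have hcos : 0 ≤ Real.cos (Real.pi / n) :=
      Real.cos_nonneg_of_neg_pi_div_two_le_of_le
        (by linarith [Real.pi_pos, div_nonneg Real.pi_pos.le n.cast_nonneg])
        (div_le_div_of_nonneg_left Real.pi_pos.le two_pos (by exact_mod_cast hn))
    simpa [hu, Fin.sum_univ_two] using hcos
  exact su_waring_two_of_diag_i_general (by omega) hu₁ hu₂ htr htr hx
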